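/- arXiv:2512.06850 — 2 statements merged into one kernel-verified Lean document; each statement's English description precedes it below -/
import Mathlib

section
/- Let b : ℤ, let e₁, e₂ : ℤ with e₁ ≤ e₂, and let M₁, M₂ be real numbers with 1 ≤ M₁ < 2 and 1 ≤ M₂ < 2. Set d = e₂ - e₁ and S = M₂ + M₁ / 2^d, and let k = 0 if S < 2 and k = 1 otherwise. Then 2^(e₁ - b) · M₁ + 2^(e₂ - b) · M₂ = 2^(e₂ + k - b) · (S / 2^k) and 1 ≤ S / 2^k < 2. That is, the two-stage algorithm (align the smaller significand, add, normalize by at most one right shift) computes the exact sum of two same-sign normalized floating-point values in normalized form. -/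
/-!
The identity holds for every shift `k`, since `2 ^ (e₂ - b) = 2 ^ (e₁ - b) * 2 ^ d` and the
factor `2 ^ k` cancels. For the range, `d ≥ 0` gives `0 ≤ M₁ / 2 ^ d ≤ M₁ < 2`, hence
`1 ≤ S < 4`, and a single halving when `2 ≤ S` brings `S` back into `[1, 2)`.
-/


/-- The two-stage algorithm (align the smaller significand, add, normalize by at
most one right shift) computes the exact sum of two same-sign normalized
floating-point values in normalized form. -/
theorem add_align_normalize_exact (b e₁ e₂ : ℤ) (h : e₁ ≤ e₂) (M₁ M₂ : ℝ)
    (hM₁ : 1 ≤ M₁) (hM₁' : M₁ < 2) (hM₂ : 1 ≤ M₂) (hM₂' : M₂ < 2)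
    (d : ℤ) (hd : d = e₂ - e₁) (S : ℝ) (hS : S = M₂ + M₁ / (2 : ℝ) ^ d)
    (k : ℤ) (hk : k = if S < 2 then 0 else 1) :
    (2 : ℝ) ^ (e₁ - b) * M₁ + (2 : ℝ) ^ (e₂ - b) * M₂ =
      (2 : ℝ) ^ (e₂ + k - b) * (S / (2 : ℝ) ^ k) ∧
    1 ≤ S / (2 : ℝ) ^ k ∧ S / (2 : ℝ) ^ k < 2 := by
  -- Aligning and summing is exact for every `k`: the powers of two telescope.
  have hsum : (2 : ℝ) ^ (e₁ - b) * M₁ + (2 : ℝ) ^ (e₂ - b) * M₂ =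
      (2 : ℝ) ^ (e₂ + k - b) * (S / (2 : ℝ) ^ k) := by
    have h1 : (2 : ℝ) ^ (e₂ - b) = 2 ^ (e₁ - b) * 2 ^ d := by
      rw [← zpow_add₀ two_ne_zero, hd]
      congr 1
      ring
    have h2 : (2 : ℝ) ^ (e₂ + k - b) = 2 ^ (e₁ - b) * 2 ^ d * 2 ^ k := by
      rw [← h1, ← zpow_add₀ two_ne_zero]
      congr 1
      ring
    rw [h1, h2, hS]
    field_simp
    ring
  -- Since `d ≥ 0`, alignment does not enlarge `M₁`, so `1 ≤ S < 4`.
  have hpow : (1 : ℝ) ≤ 2 ^ d := one_le_zpow₀ one_le_two (by omega)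
  have hnonneg : 0 ≤ M₁ / (2 : ℝ) ^ d := by positivity
  have hle : M₁ / (2 : ℝ) ^ d ≤ M₁ := div_le_self (by linarith) hpow
  refine ⟨hsum, ?_⟩
  split_ifs at hk with hlt
  · subst hk
    rw [zpow_zero, div_one]
    exact ⟨by linarith, hlt⟩
  · subst hk
    rw [zpow_one]
    constructor <;> linarith
end

section
/- Let b : ℤ, let e₁, e₂ : ℤ with e₂ - e₁ ≥ 2, and let M₁, M₂ be real numbers with 1 ≤ M₁ < 2 and 1 ≤ M₂ < 2. Set d = e₂ - e₁ and D = M₂ - M₁ / 2^d, and let k = 0 if D ≥ 1 and k = 1 otherwise. Then 2^(e₂ - b) · M₂ - 2^(e₁ - b) · M₁ = 2^(e₂ - k - b) · (2^k · D) and 1 ≤ 2^k · D < 2. That is, when the exponent difference is at least 2, the two-stage algorithm (align, subtract, normalize by at most one left shift) computes the exact difference of two normalized floating-point magnitudes in normalized form. -/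
/-! Since `d ≥ 2`, the aligned significand `M₁ / 2 ^ d` lies strictly between `0` and `1 / 2`, so
`1 / 2 < D < 2`; hence either `D` or `2 * D` is in `[1, 2)`. The value identity is the law of
exponents for powers of two. -/

/-- When the exponent difference is at least 2, the two-stage algorithm (align,
subtract, normalize by at most one left shift) computes the exact difference of
two normalized floating-point magnitudes in normalized form. -/
theorem sub_align_normalize_exact (b e₁ e₂ : ℤ) (h : 2 ≤ e₂ - e₁) (M₁ M₂ : ℝ)
    (hM₁ : 1 ≤ M₁) (hM₁' : M₁ < 2) (hM₂ : 1 ≤ M₂) (hM₂' : M₂ < 2)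
    (d : ℤ) (hd : d = e₂ - e₁) (D : ℝ) (hD : D = M₂ - M₁ / (2 : ℝ) ^ d)
    (k : ℤ) (hk : k = if 1 ≤ D then 0 else 1) :
    (2 : ℝ) ^ (e₂ - b) * M₂ - (2 : ℝ) ^ (e₁ - b) * M₁ =
      (2 : ℝ) ^ (e₂ - k - b) * ((2 : ℝ) ^ k * D) ∧
    1 ≤ (2 : ℝ) ^ k * D ∧ (2 : ℝ) ^ k * D < 2 := by
  have h4 : (4 : ℝ) ≤ (2 : ℝ) ^ d := by
    have h2d : (2 : ℝ) ^ (2 : ℤ) ≤ (2 : ℝ) ^ d :=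
      zpow_le_zpow_right₀ (by norm_num) (by lia)
    norm_num at h2d
    exact h2d
  have hpos : (0 : ℝ) < (2 : ℝ) ^ d := by linarith
  -- The aligned significand is below `2 / 4`, so one left shift always suffices.
  have ha : M₁ / (2 : ℝ) ^ d < 1 / 2 := by
    rw [div_lt_iff₀ hpos]
    linarith
  have ha0 : 0 < M₁ / (2 : ℝ) ^ d := div_pos (by linarith) hpos
  refine ⟨?_, ?_⟩
  · have hshift : (2 : ℝ) ^ (e₂ - b) = (2 : ℝ) ^ (e₂ - k - b) * (2 : ℝ) ^ k := by
      rw [← zpow_add₀ (by norm_num)]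
      congr 1
      ring
    have halign : (2 : ℝ) ^ (e₂ - b) = (2 : ℝ) ^ (e₁ - b) * (2 : ℝ) ^ d := by
      rw [← zpow_add₀ (by norm_num), hd]
      congr 1
      ring
    rw [← mul_assoc, ← hshift, hD, halign]
    field_simp
  · by_cases h1 : 1 ≤ D
    · rw [hk, if_pos h1, zpow_zero]
      constructor <;> linarith
    · rw [hk, if_neg h1, zpow_one]
      constructor <;> linarith
end
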